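/- Let N ≥ 1 and let a partial filling be given by a set Pre ⊆ {1,…,N}³ of triples (r,c,v) (entry (r,c) pre-filled with symbol v), with at most one triple per entry (r,c). Let P_ls(N,Pre) be the ground normal logic program consisting of the facts num(1),…,num(N) and preassigned(r,c,v) for (r,c,v) ∈ Pre, together with the standard translation of: the generalized partition rule ⊕_V square(R,C,V) ← num(R), num(C), num(V), the constraints ⇐ square(R,C₁,V), square(R,C₂,V), C₁ ≠ C₂ and ⇐ square(R₁,C,V), square(R₂,C,V), R₁ ≠ R₂, and the constraint square(R,C,V) ⇐ preassigned(R,C,V) (each constraint translated as c₀ ← Body, ¬c₀). Then the stable models of P_ls(N,Pre) are in bijection with the functions sq : {1,…,N} × {1,…,N} → {1,…,N} such that sq(r,c₁) ≠ sq(r,c₂) for c₁ ≠ c₂, sq(r₁,c) ≠ sq(r₂,c) for r₁ ≠ r₂, and sq(r,c) = v for every (r,c,v) ∈ Pre; i.e., with the Latin squares of order N extending the partial filling Pre. In particular, P_ls(N,Pre) has a stable model if and only if Pre can be completed to a Latin square of order N. -/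

import Mathlib

/-- A ground normal logic program rule: head atom, positive body atoms, negated body atoms. -/
structure Rule (α : Type*) where
  head : α
  pos : Set α
  neg : Set α

/-- A fact is a rule with empty body. -/
def Rule.fact {α : Type*} (a : α) : Rule α := ⟨a, ∅, ∅⟩

/-- `I` is closed under the Gelfond–Lifschitz reduct `P^M`: for every rule of `P` whose
negated body atoms are all outside `M`, if the positive body is contained in `I` then
so is the head. -/
def ClosedUnderReduct {α : Type*} (P : Set (Rule α)) (M I : Set α) : Prop :=
  ∀ r ∈ P, (∀ c ∈ r.neg, c ∉ M) → r.pos ⊆ I → r.head ∈ I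

/-- Least model of the reduct `P^M`: the least set of atoms closed under its rules. -/
def LeastReductModel {α : Type*} (P : Set (Rule α)) (M : Set α) : Set α :=
  ⋂₀ {I | ClosedUnderReduct P M I}

/-- `M` is a stable model of `P` if it equals the least model of the reduct `P^M`. -/
def IsStableModel {α : Type*} (P : Set (Rule α)) (M : Set α) : Prop :=
  M = LeastReductModel P M

/-- Atoms of the Latin-squares program (`c1`, `c2`, `c3` are the fresh constraint atoms). -/
inductive LAtom where
  | num : ℕ → LAtom
  | preassigned : ℕ → ℕ → ℕ → LAtom
  | square : ℕ → ℕ → ℕ → LAtom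
  | diff : ℕ → ℕ → ℕ → LAtom
  | c1 : LAtom
  | c2 : LAtom
  | c3 : LAtom

/-- The ground program `P_ls(N,Pre)`: facts, the translated generalized partition rule
`⊕_V square(R,C,V) ← num(R), num(C), num(V)` and the three translated constraints. -/
def lsProgram (N : ℕ) (Pre : Finset (ℕ × ℕ × ℕ)) : Set (Rule LAtom) :=
  {r | ∃ n ∈ Finset.Icc 1 N, r = Rule.fact (LAtom.num n)} ∪
  {r | ∃ p ∈ Pre, r = Rule.fact (LAtom.preassigned p.1 p.2.1 p.2.2)} ∪
  {r | ∃ x ∈ Finset.Icc 1 N, ∃ c ∈ Finset.Icc 1 N, ∃ v ∈ Finset.Icc 1 N,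
      r = ⟨LAtom.square x c v, ∅, {LAtom.diff x c v}⟩} ∪
  {r | ∃ x ∈ Finset.Icc 1 N, ∃ c ∈ Finset.Icc 1 N, ∃ v ∈ Finset.Icc 1 N,
      ∃ v' ∈ Finset.Icc 1 N, v' ≠ v ∧
      r = ⟨LAtom.diff x c v, {LAtom.square x c v'}, ∅⟩} ∪
  {r | ∃ x ∈ Finset.Icc 1 N, ∃ c1 ∈ Finset.Icc 1 N, ∃ c2 ∈ Finset.Icc 1 N,
      ∃ v ∈ Finset.Icc 1 N, c1 ≠ c2 ∧
      r = ⟨LAtom.c1, {LAtom.square x c1 v, LAtom.square x c2 v}, {LAtom.c1}⟩} ∪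
  {r | ∃ r1 ∈ Finset.Icc 1 N, ∃ r2 ∈ Finset.Icc 1 N, ∃ c ∈ Finset.Icc 1 N,
      ∃ v ∈ Finset.Icc 1 N, r1 ≠ r2 ∧
      r = ⟨LAtom.c2, {LAtom.square r1 c v, LAtom.square r2 c v}, {LAtom.c2}⟩} ∪
  {r | ∃ x ∈ Finset.Icc 1 N, ∃ c ∈ Finset.Icc 1 N, ∃ v ∈ Finset.Icc 1 N,
      r = ⟨LAtom.c3, {LAtom.preassigned x c v}, {LAtom.square x c v, LAtom.c3}⟩}

theorem LeastReductModel.subset_of_closed {α : Type*} {P : Set (Rule α)} {M I : Set α}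
    (h : ClosedUnderReduct P M I) : LeastReductModel P M ⊆ I :=
  Set.sInter_subset_of_mem h

theorem LeastReductModel.closed {α : Type*} (P : Set (Rule α)) (M : Set α) :
    ClosedUnderReduct P M (LeastReductModel P M) := fun r hr hneg hpos _ hI =>
  hI r hr hneg (hpos.trans (subset_of_closed hI))

theorem IsStableModel.closed {α : Type*} {P : Set (Rule α)} {M : Set α}
    (h : IsStableModel P M) : ClosedUnderReduct P M M := by
  have hc := LeastReductModel.closed P M
  rwa [← h] at hc

/-- Every atom of a stable model is the head of a rule whose body holds in the model. -/
theorem IsStableModel.supported {α : Type*} {P : Set (Rule α)} {M : Set α}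
    (h : IsStableModel P M) {a : α} (ha : a ∈ M) :
    ∃ r ∈ P, r.head = a ∧ (∀ c ∈ r.neg, c ∉ M) ∧ r.pos ⊆ M := by
  by_contra hcon
  have hI : ClosedUnderReduct P M (M \ {a}) := fun r hr hneg hpos =>
    have hposM := hpos.trans Set.sdiff_subset
    ⟨h.closed r hr hneg hposM, fun hra => hcon ⟨r, hr, hra, hneg, hposM⟩⟩
  have haL : a ∈ LeastReductModel P M := h ▸ ha
  exact (LeastReductModel.subset_of_closed hI haL).2 rfl

theorem isStableModel_of_closed {α : Type*} {P : Set (Rule α)} {M : Set α}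
    (hM : ClosedUnderReduct P M M) (hmin : ∀ I, ClosedUnderReduct P M I → M ⊆ I) :
    IsStableModel P M :=
  Set.Subset.antisymm (Set.subset_sInter hmin) (LeastReductModel.subset_of_closed hM)

/-- Closure under the reduct of the Latin-squares program, rule schema by rule schema. -/
theorem closedUnderReduct_lsProgram_iff {N : ℕ} {Pre : Finset (ℕ × ℕ × ℕ)} {M I : Set LAtom} :
    ClosedUnderReduct (lsProgram N Pre) M I ↔
      (∀ n ∈ Finset.Icc 1 N, LAtom.num n ∈ I) ∧
      (∀ p ∈ Pre, LAtom.preassigned p.1 p.2.1 p.2.2 ∈ I) ∧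
      (∀ x ∈ Finset.Icc 1 N, ∀ c ∈ Finset.Icc 1 N, ∀ v ∈ Finset.Icc 1 N,
        LAtom.diff x c v ∉ M → LAtom.square x c v ∈ I) ∧
      (∀ x ∈ Finset.Icc 1 N, ∀ c ∈ Finset.Icc 1 N, ∀ v ∈ Finset.Icc 1 N,
        ∀ v' ∈ Finset.Icc 1 N, v' ≠ v → LAtom.square x c v' ∈ I → LAtom.diff x c v ∈ I) ∧
      (∀ x ∈ Finset.Icc 1 N, ∀ c ∈ Finset.Icc 1 N, ∀ c' ∈ Finset.Icc 1 N,
        ∀ v ∈ Finset.Icc 1 N, c ≠ c' → LAtom.c1 ∉ M →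
        LAtom.square x c v ∈ I → LAtom.square x c' v ∈ I → LAtom.c1 ∈ I) ∧
      (∀ x ∈ Finset.Icc 1 N, ∀ x' ∈ Finset.Icc 1 N, ∀ c ∈ Finset.Icc 1 N,
        ∀ v ∈ Finset.Icc 1 N, x ≠ x' → LAtom.c2 ∉ M →
        LAtom.square x c v ∈ I → LAtom.square x' c v ∈ I → LAtom.c2 ∈ I) ∧
      (∀ x ∈ Finset.Icc 1 N, ∀ c ∈ Finset.Icc 1 N, ∀ v ∈ Finset.Icc 1 N,
        LAtom.square x c v ∉ M → LAtom.c3 ∉ M →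
        LAtom.preassigned x c v ∈ I → LAtom.c3 ∈ I) := by
  constructor
  · intro h
    refine ⟨fun n hn => ?_, fun p hp => ?_, fun x hx c hc v hv hd => ?_,
      fun x hx c hc v hv v' hv' hne hs => ?_, fun x hx c hc c' hc' v hv hne hM hs hs' => ?_,
      fun x hx x' hx' c hc v hv hne hM hs hs' => ?_, fun x hx c hc v hv hs hM hp => ?_⟩
    · exact h (Rule.fact (.num n)) (.inl (.inl (.inl (.inl (.inl (.inl ⟨n, hn, rfl⟩))))))
        (by simp [Rule.fact]) (by simp [Rule.fact])
    · exact h (Rule.fact (.preassigned p.1 p.2.1 p.2.2))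
        (.inl (.inl (.inl (.inl (.inl (.inr ⟨p, hp, rfl⟩))))))
        (by simp [Rule.fact]) (by simp [Rule.fact])
    · exact h _ (.inl (.inl (.inl (.inl (.inr ⟨x, hx, c, hc, v, hv, rfl⟩)))))
        (by simpa using hd) (by simp)
    · exact h _ (.inl (.inl (.inl (.inr ⟨x, hx, c, hc, v, hv, v', hv', hne, rfl⟩))))
        (by simp) (by simpa using hs)
    · exact h _ (.inl (.inl (.inr ⟨x, hx, c, hc, c', hc', v, hv, hne, rfl⟩)))
        (by simpa using hM) (by simp [Set.insert_subset_iff, hs, hs'])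
    · exact h _ (.inl (.inr ⟨x, hx, x', hx', c, hc, v, hv, hne, rfl⟩))
        (by simpa using hM) (by simp [Set.insert_subset_iff, hs, hs'])
    · exact h _ (.inr ⟨x, hx, c, hc, v, hv, rfl⟩) (by simp [hs, hM]) (by simpa using hp)
  · rintro ⟨h1, h2, h3, h4, h5, h6, h7⟩ r hr hneg hpos
    rcases hr with (((((⟨n, hn, rfl⟩ | ⟨p, hp, rfl⟩) | ⟨x, hx, c, hc, v, hv, rfl⟩) |
      ⟨x, hx, c, hc, v, hv, v', hv', hne, rfl⟩) | ⟨x, hx, c, hc, c', hc', v, hv, hne, rfl⟩) |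
      ⟨x, hx, x', hx', c, hc, v, hv, hne, rfl⟩) | ⟨x, hx, c, hc, v, hv, rfl⟩
    · exact h1 n hn
    · exact h2 p hp
    · exact h3 x hx c hc v hv (hneg _ rfl)
    · exact h4 x hx c hc v hv v' hv' hne (hpos rfl)
    · exact h5 x hx c hc c' hc' v hv hne (hneg _ rfl) (hpos (.inl rfl)) (hpos (.inr rfl))
    · exact h6 x hx x' hx' c hc v hv hne (hneg _ rfl) (hpos (.inl rfl)) (hpos (.inr rfl))
    · exact h7 x hx c hc v hv (hneg _ (.inl rfl)) (hneg _ (.inr rfl)) (hpos rfl)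

/-- What it means for an atom to be the head of a rule of the Latin-squares program whose
body holds in `M`. -/
def LAtom.Supported (N : ℕ) (Pre : Finset (ℕ × ℕ × ℕ)) (M : Set LAtom) : LAtom → Prop
  | .num n => n ∈ Finset.Icc 1 N
  | .preassigned x c v => (x, c, v) ∈ Pre
  | .square x c v => x ∈ Finset.Icc 1 N ∧ c ∈ Finset.Icc 1 N ∧ v ∈ Finset.Icc 1 N ∧
      LAtom.diff x c v ∉ M
  | .diff x c v => x ∈ Finset.Icc 1 N ∧ c ∈ Finset.Icc 1 N ∧ v ∈ Finset.Icc 1 N ∧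
      ∃ v' ∈ Finset.Icc 1 N, v' ≠ v ∧ LAtom.square x c v' ∈ M
  | .c1 => LAtom.c1 ∉ M
  | .c2 => LAtom.c2 ∉ M
  | .c3 => LAtom.c3 ∉ M

theorem IsStableModel.supported_lsProgram {N : ℕ} {Pre : Finset (ℕ × ℕ × ℕ)} {M : Set LAtom}
    (h : IsStableModel (lsProgram N Pre) M) {a : LAtom} (ha : a ∈ M) :
    a.Supported N Pre M := by
  obtain ⟨r, hr, rfl, hneg, hpos⟩ := h.supported ha
  rcases hr with (((((⟨n, hn, rfl⟩ | ⟨p, hp, rfl⟩) | ⟨x, hx, c, hc, v, hv, rfl⟩) |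
    ⟨x, hx, c, hc, v, hv, v', hv', hne, rfl⟩) | ⟨x, hx, c, hc, c', hc', v, hv, hne, rfl⟩) |
    ⟨x, hx, x', hx', c, hc, v, hv, hne, rfl⟩) | ⟨x, hx, c, hc, v, hv, rfl⟩
  · exact hn
  · exact hp
  · exact ⟨hx, hc, hv, hneg _ rfl⟩
  · exact ⟨hx, hc, hv, v', hv', hne, hpos rfl⟩
  · exact hneg _ rfl
  · exact hneg _ rfl
  · exact hneg _ (.inr rfl)

/-- In a stable model every cell carries exactly one symbol. -/
theorem IsStableModel.exists_square_mem_iff {N : ℕ} (hN : 1 ≤ N) {Pre : Finset (ℕ × ℕ × ℕ)}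
    {M : Set LAtom} (h : IsStableModel (lsProgram N Pre) M)
    (x c : {n : ℕ // n ∈ Finset.Icc 1 N}) :
    ∃ v : {n : ℕ // n ∈ Finset.Icc 1 N},
      ∀ w ∈ Finset.Icc 1 N, LAtom.square x c w ∈ M ↔ w = v := by
  obtain ⟨-, -, hsq, hdf, -, -, -⟩ := closedUnderReduct_lsProgram_iff.1 h.closed
  obtain ⟨v, hv, hvM⟩ : ∃ v ∈ Finset.Icc 1 N, LAtom.square x c v ∈ M := by
    by_contra! hcon
    have h1 : 1 ∈ Finset.Icc 1 N := Finset.mem_Icc.2 ⟨le_rfl, hN⟩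
    refine hcon 1 h1 (hsq x x.2 c c.2 1 h1 fun hd => ?_)
    obtain ⟨-, -, -, v', hv', -, hs⟩ := h.supported_lsProgram hd
    exact hcon v' hv' hs
  refine ⟨⟨v, hv⟩, fun w hw => ⟨fun hwM => ?_, fun hwv => hwv ▸ hvM⟩⟩
  by_contra hne
  exact (h.supported_lsProgram hwM).2.2.2
    (hdf x x.2 c c.2 w hw v hv (fun e => hne e.symm) hvM)

/-- The interpretation encoding the square `sq`. -/
def lsModel (N : ℕ) (Pre : Finset (ℕ × ℕ × ℕ))
    (sq : {n : ℕ // n ∈ Finset.Icc 1 N} → {n : ℕ // n ∈ Finset.Icc 1 N} →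
      {n : ℕ // n ∈ Finset.Icc 1 N}) : Set LAtom :=
  {a | ∃ n ∈ Finset.Icc 1 N, a = LAtom.num n} ∪
    {a | ∃ p ∈ Pre, a = LAtom.preassigned p.1 p.2.1 p.2.2} ∪
    {a | ∃ r c : {n : ℕ // n ∈ Finset.Icc 1 N},
        a = LAtom.square (r : ℕ) (c : ℕ) (sq r c : ℕ)} ∪
    {a | ∃ (r c : {n : ℕ // n ∈ Finset.Icc 1 N}) (v : ℕ), v ∈ Finset.Icc 1 N ∧
        v ≠ (sq r c : ℕ) ∧ a = LAtom.diff (r : ℕ) (c : ℕ) v}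

section lsModel

variable {N : ℕ} {Pre : Finset (ℕ × ℕ × ℕ)}
  {sq : {n : ℕ // n ∈ Finset.Icc 1 N} → {n : ℕ // n ∈ Finset.Icc 1 N} →
    {n : ℕ // n ∈ Finset.Icc 1 N}}

theorem num_mem_lsModel {n : ℕ} : LAtom.num n ∈ lsModel N Pre sq ↔ n ∈ Finset.Icc 1 N := by
  simp [lsModel]

theorem preassigned_mem_lsModel {x c v : ℕ} :
    LAtom.preassigned x c v ∈ lsModel N Pre sq ↔ (x, c, v) ∈ Pre := by
  simp [lsModel]

theorem square_mem_lsModel {x c v : ℕ} : LAtom.square x c v ∈ lsModel N Pre sq ↔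
    ∃ (hx : x ∈ Finset.Icc 1 N) (hc : c ∈ Finset.Icc 1 N), v = sq ⟨x, hx⟩ ⟨c, hc⟩ := by
  constructor
  · rintro (((⟨_, _, h⟩ | ⟨_, _, h⟩) | ⟨r, c, h⟩) | ⟨_, _, _, _, _, h⟩) <;> cases h
    exact ⟨r.2, c.2, rfl⟩
  · rintro ⟨hx, hc, rfl⟩
    exact .inl (.inr ⟨⟨x, hx⟩, ⟨c, hc⟩, rfl⟩)

theorem diff_mem_lsModel {x c v : ℕ} : LAtom.diff x c v ∈ lsModel N Pre sq ↔
    ∃ (hx : x ∈ Finset.Icc 1 N) (hc : c ∈ Finset.Icc 1 N),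
      v ∈ Finset.Icc 1 N ∧ v ≠ sq ⟨x, hx⟩ ⟨c, hc⟩ := by
  constructor
  · rintro (((⟨_, _, h⟩ | ⟨_, _, h⟩) | ⟨_, _, h⟩) | ⟨r, c, v, hv, hne, h⟩) <;> cases h
    exact ⟨r.2, c.2, hv, hne⟩
  · rintro ⟨hx, hc, hv, hne⟩
    exact .inr ⟨⟨x, hx⟩, ⟨c, hc⟩, v, hv, hne, rfl⟩

theorem c1_notMem_lsModel : LAtom.c1 ∉ lsModel N Pre sq := by
  simp [lsModel]

theorem c2_notMem_lsModel : LAtom.c2 ∉ lsModel N Pre sq := by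
  simp [lsModel]

theorem c3_notMem_lsModel : LAtom.c3 ∉ lsModel N Pre sq := by
  simp [lsModel]

theorem isStableModel_lsModel
    (hrow : ∀ r c1 c2, c1 ≠ c2 → sq r c1 ≠ sq r c2)
    (hcol : ∀ r1 r2 c, r1 ≠ r2 → sq r1 c ≠ sq r2 c)
    (hext : ∀ p ∈ Pre, ∀ (hr : p.1 ∈ Finset.Icc 1 N) (hc : p.2.1 ∈ Finset.Icc 1 N),
      (sq ⟨p.1, hr⟩ ⟨p.2.1, hc⟩ : ℕ) = p.2.2) :
    IsStableModel (lsProgram N Pre) (lsModel N Pre sq) := by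
  refine isStableModel_of_closed (closedUnderReduct_lsProgram_iff.2 ⟨?_, ?_, ?_, ?_, ?_, ?_, ?_⟩)
    fun I hI => ?_
  · exact fun n hn => num_mem_lsModel.2 hn
  · exact fun p hp => preassigned_mem_lsModel.2 hp
  · intro x hx c hc v hv hd
    refine square_mem_lsModel.2 ⟨hx, hc, ?_⟩
    by_contra hne
    exact hd (diff_mem_lsModel.2 ⟨hx, hc, hv, hne⟩)
  · intro x hx c hc v hv v' _ hne hs
    obtain ⟨_, _, rfl⟩ := square_mem_lsModel.1 hs
    exact diff_mem_lsModel.2 ⟨hx, hc, hv, hne.symm⟩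
  · intro x hx c hc c' hc' v _ hne _ hs hs'
    obtain ⟨_, _, e⟩ := square_mem_lsModel.1 hs
    obtain ⟨_, _, e'⟩ := square_mem_lsModel.1 hs'
    exact absurd (Subtype.ext (e.symm.trans e'))
      (hrow ⟨x, hx⟩ ⟨c, hc⟩ ⟨c', hc'⟩ fun h => hne (congrArg Subtype.val h))
  · intro x hx x' hx' c hc v _ hne _ hs hs'
    obtain ⟨_, _, e⟩ := square_mem_lsModel.1 hs
    obtain ⟨_, _, e'⟩ := square_mem_lsModel.1 hs'
    exact absurd (Subtype.ext (e.symm.trans e'))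
      (hcol ⟨x, hx⟩ ⟨x', hx'⟩ ⟨c, hc⟩ fun h => hne (congrArg Subtype.val h))
  · intro x hx c hc v _ hs _ hp
    exact absurd (square_mem_lsModel.2
      ⟨hx, hc, (hext _ (preassigned_mem_lsModel.1 hp) hx hc).symm⟩) hs
  · obtain ⟨hnum, hpre, hsq, hdf, -, -, -⟩ := closedUnderReduct_lsProgram_iff.1 hI
    have hsqI (r c : {n : ℕ // n ∈ Finset.Icc 1 N}) : LAtom.square r c (sq r c) ∈ I :=
      hsq r r.2 c c.2 _ (sq r c).2 fun hd => by
        obtain ⟨_, _, _, hne⟩ := diff_mem_lsModel.1 hd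
        exact hne rfl
    rintro _ (((⟨n, hn, rfl⟩ | ⟨p, hp, rfl⟩) | ⟨r, c, rfl⟩) | ⟨r, c, v, hv, hne, rfl⟩)
    · exact hnum n hn
    · exact hpre p hp
    · exact hsqI r c
    · exact hdf r r.2 c c.2 v hv _ (sq r c).2 hne.symm (hsqI r c)

end lsModel

theorem IsStableModel.exists_eq_lsModel {N : ℕ} (hN : 1 ≤ N) {Pre : Finset (ℕ × ℕ × ℕ)}
    (hPre : ∀ p ∈ Pre, p.1 ∈ Finset.Icc 1 N ∧ p.2.1 ∈ Finset.Icc 1 N ∧ p.2.2 ∈ Finset.Icc 1 N)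
    {M : Set LAtom} (h : IsStableModel (lsProgram N Pre) M) :
    ∃ sq : {n : ℕ // n ∈ Finset.Icc 1 N} → {n : ℕ // n ∈ Finset.Icc 1 N} →
        {n : ℕ // n ∈ Finset.Icc 1 N},
      (∀ r c1 c2, c1 ≠ c2 → sq r c1 ≠ sq r c2) ∧
      (∀ r1 r2 c, r1 ≠ r2 → sq r1 c ≠ sq r2 c) ∧
      (∀ p ∈ Pre, ∀ (hr : p.1 ∈ Finset.Icc 1 N) (hc : p.2.1 ∈ Finset.Icc 1 N),
        (sq ⟨p.1, hr⟩ ⟨p.2.1, hc⟩ : ℕ) = p.2.2) ∧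
      M = lsModel N Pre sq := by
  obtain ⟨hnum, hpre, hsq, hdf, hrow, hcol, hext⟩ :=
    closedUnderReduct_lsProgram_iff.1 h.closed
  have hc1 : LAtom.c1 ∉ M := fun hc => h.supported_lsProgram hc hc
  have hc2 : LAtom.c2 ∉ M := fun hc => h.supported_lsProgram hc hc
  have hc3 : LAtom.c3 ∉ M := fun hc => h.supported_lsProgram hc hc
  choose sq hval using h.exists_square_mem_iff hN
  have hmem (r c : {n : ℕ // n ∈ Finset.Icc 1 N}) : LAtom.square r c (sq r c) ∈ M :=
    (hval r c _ (sq r c).2).2 rfl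
  refine ⟨sq, fun r c c' hne e => ?_, fun r r' c hne e => ?_, fun p hp hr hc => ?_, ?_⟩
  · exact hc1 (hrow r r.2 c c.2 c' c'.2 _ (sq r c).2 (fun e => hne (Subtype.ext e)) hc1
      (hmem r c) (e ▸ hmem r c'))
  · exact hc2 (hcol r r.2 r' r'.2 c c.2 _ (sq r c).2 (fun e => hne (Subtype.ext e)) hc2
      (hmem r c) (e ▸ hmem r' c))
  · have hv := (hPre p hp).2.2
    refine ((hval ⟨p.1, hr⟩ ⟨p.2.1, hc⟩ _ hv).1 ?_).symm
    by_contra hs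
    exact hc3 (hext _ hr _ hc _ hv hs hc3 (hpre p hp))
  · apply Set.Subset.antisymm
    · intro a ha
      have hsup := h.supported_lsProgram ha
      cases a with
      | num n => exact num_mem_lsModel.2 hsup
      | preassigned x c v => exact preassigned_mem_lsModel.2 hsup
      | square x c v =>
        obtain ⟨hx, hc, hv, -⟩ := hsup
        exact square_mem_lsModel.2 ⟨hx, hc, (hval ⟨x, hx⟩ ⟨c, hc⟩ v hv).1 ha⟩
      | diff x c v =>
        obtain ⟨hx, hc, hv, v', hv', hne, hs⟩ := hsup
        have e := (hval ⟨x, hx⟩ ⟨c, hc⟩ v' hv').1 hs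
        exact diff_mem_lsModel.2 ⟨hx, hc, hv, fun e' => hne (e.trans e'.symm)⟩
      | c1 => exact absurd ha hc1
      | c2 => exact absurd ha hc2
      | c3 => exact absurd ha hc3
    · rintro _ (((⟨n, hn, rfl⟩ | ⟨p, hp, rfl⟩) | ⟨r, c, rfl⟩) | ⟨r, c, v, hv, hne, rfl⟩)
      · exact hnum n hn
      · exact hpre p hp
      · exact hmem r c
      · exact hdf r r.2 c c.2 v hv _ (sq r c).2 hne.symm (hmem r c)

theorem stmt12 (N : ℕ) (hN : 1 ≤ N) (Pre : Finset (ℕ × ℕ × ℕ))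
    (hPre : ∀ p ∈ Pre, p.1 ∈ Finset.Icc 1 N ∧ p.2.1 ∈ Finset.Icc 1 N ∧ p.2.2 ∈ Finset.Icc 1 N)
    (hPre1 : ∀ p ∈ Pre, ∀ q ∈ Pre, p.1 = q.1 → p.2.1 = q.2.1 → p = q) :
    (∀ M : Set LAtom, IsStableModel (lsProgram N Pre) M ↔
      ∃ sq : {n : ℕ // n ∈ Finset.Icc 1 N} → {n : ℕ // n ∈ Finset.Icc 1 N} →
          {n : ℕ // n ∈ Finset.Icc 1 N},
        (∀ r c1 c2, c1 ≠ c2 → sq r c1 ≠ sq r c2) ∧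
        (∀ r1 r2 c, r1 ≠ r2 → sq r1 c ≠ sq r2 c) ∧
        (∀ p ∈ Pre, ∀ (hr : p.1 ∈ Finset.Icc 1 N) (hc : p.2.1 ∈ Finset.Icc 1 N),
          (sq ⟨p.1, hr⟩ ⟨p.2.1, hc⟩ : ℕ) = p.2.2) ∧
        M = {a | ∃ n ∈ Finset.Icc 1 N, a = LAtom.num n} ∪
            {a | ∃ p ∈ Pre, a = LAtom.preassigned p.1 p.2.1 p.2.2} ∪
            {a | ∃ r c : {n : ℕ // n ∈ Finset.Icc 1 N},
                a = LAtom.square (r : ℕ) (c : ℕ) (sq r c : ℕ)} ∪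
            {a | ∃ (r c : {n : ℕ // n ∈ Finset.Icc 1 N}) (v : ℕ), v ∈ Finset.Icc 1 N ∧
                v ≠ (sq r c : ℕ) ∧ a = LAtom.diff (r : ℕ) (c : ℕ) v}) ∧
    ((∃ M : Set LAtom, IsStableModel (lsProgram N Pre) M) ↔
      ∃ sq : {n : ℕ // n ∈ Finset.Icc 1 N} → {n : ℕ // n ∈ Finset.Icc 1 N} →
          {n : ℕ // n ∈ Finset.Icc 1 N},
        (∀ r c1 c2, c1 ≠ c2 → sq r c1 ≠ sq r c2) ∧
        (∀ r1 r2 c, r1 ≠ r2 → sq r1 c ≠ sq r2 c) ∧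
        (∀ p ∈ Pre, ∀ (hr : p.1 ∈ Finset.Icc 1 N) (hc : p.2.1 ∈ Finset.Icc 1 N),
          (sq ⟨p.1, hr⟩ ⟨p.2.1, hc⟩ : ℕ) = p.2.2)) := by
  refine ⟨fun M => ⟨fun h => h.exists_eq_lsModel hN hPre, ?_⟩, ?_, ?_⟩
  · rintro ⟨sq, hrow, hcol, hext, rfl⟩
    exact isStableModel_lsModel hrow hcol hext
  · rintro ⟨M, h⟩
    obtain ⟨sq, hrow, hcol, hext, -⟩ := h.exists_eq_lsModel hN hPre
    exact ⟨sq, hrow, hcol, hext⟩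
  · rintro ⟨sq, hrow, hcol, hext⟩
    exact ⟨_, isStableModel_lsModel hrow hcol hext⟩
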